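/- Let P_12 denote the path with 12 edges. Painter has a winning strategy in the deterministic P_12-avoidance game with 2 colors and tree size restriction 78; consequently k*(P_12,2) ≥ 79. A winning strategy for Painter is: color an edge blue if and only if it is adjacent to a red edge and coloring it blue does not complete a blue copy of P_12, and otherwise color it red. -/

import Mathlib

open SimpleGraph Filter Asymptotics
open scoped Classical

/-- A history of the game: the sequence of edges presented so far, together with
the colors (elements of `Fin r`, representing the colors `1,…,r`) they received. -/
abbrev EdgeHistory (V : Type) (r : ℕ) := List (Sym2 V × Fin r)

/-- A Painter strategy on vertex type `V` with `r` colors: a function assigning a color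
to every pair (history, new edge). -/
abbrev PainterStrategy (V : Type) (r : ℕ) := EdgeHistory V r → Sym2 V → Fin r

/-- Auxiliary function: run a Painter strategy on a list of presented edges,
extending the given history. -/
def runPainterAux {V : Type} {r : ℕ} (π : PainterStrategy V r) :
    EdgeHistory V r → List (Sym2 V) → EdgeHistory V r
  | h, [] => h
  | h, e :: es => runPainterAux π (h ++ [(e, π h e)]) es

/-- The colored history obtained by coloring the edges of `l` successively
according to the Painter strategy `π`. -/
def runPainter {V : Type} {r : ℕ} (π : PainterStrategy V r) (l : List (Sym2 V)) :
    EdgeHistory V r :=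
  runPainterAux π [] l

/-- `G` contains a copy of `F`, i.e. a subgraph isomorphic to `F`. -/
def IsCopy {α β : Type} (F : SimpleGraph α) (G : SimpleGraph β) : Prop :=
  ∃ f : α ↪ β, ∀ u v : α, F.Adj u v → G.Adj (f u) (f v)

/-- The graph formed by the edges of color `c` in the history `h`. -/
def colorGraph {V : Type} {r : ℕ} (h : EdgeHistory V r) (c : Fin r) : SimpleGraph V :=
  SimpleGraph.fromEdgeSet {e | (e, c) ∈ h}

/-- The history `h` contains a monochromatic copy of `F`. -/
def HasMonoCopy {α V : Type} {r : ℕ} (F : SimpleGraph α) (h : EdgeHistory V r) : Prop :=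
  ∃ c : Fin r, IsCopy F (colorGraph h c)

/-- The number of edges of `G` lying entirely within the vertex set `S`. -/
noncomputable def edgesWithin {V : Type} (G : SimpleGraph V) (S : Set V) : ℕ :=
  (G.edgeSet ∩ {e | ∀ v ∈ e, v ∈ S}).ncard

/-- `m(G) ≤ d`: every subgraph `H` of `G` with at least one vertex satisfies `e_H ≤ d · v_H`. -/
def DensityLE {V : Type} (G : SimpleGraph V) (d : ℝ) : Prop :=
  ∀ S : Finset V, S.Nonempty → (edgesWithin G (↑S : Set V) : ℝ) ≤ d * (S.card : ℝ)

/-- `G` contains no cycle and every connected component of `G` has at most `k` edges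
(equivalently, `G` is acyclic and contains no connected subgraph with more than `k` edges). -/
def TreeSizeLE {V : Type} (G : SimpleGraph V) (k : ℕ) : Prop :=
  G.IsAcyclic ∧ ∀ S : Set V, (G.induce S).Connected → edgesWithin G S ≤ k

/-- A legal sequence of moves for Builder: distinct non-loop edges. -/
def ValidEdgeSeq {V : Type} (l : List (Sym2 V)) : Prop :=
  l.Nodup ∧ ∀ e ∈ l, ¬ e.IsDiag

/-- The (uncolored) board formed by a list of edges. -/
def boardOf {V : Type} (l : List (Sym2 V)) : SimpleGraph V :=
  SimpleGraph.fromEdgeSet {e | e ∈ l}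

/-- Builder has a winning strategy in the deterministic `F`-avoidance game with `r` colors
and density restriction `d`. -/
def BuilderWinsDensity {α : Type} (F : SimpleGraph α) (r : ℕ) (d : ℝ) : Prop :=
  ∃ a : ℕ, ∀ π : PainterStrategy (Fin a) r, ∃ l : List (Sym2 (Fin a)),
    ValidEdgeSeq l ∧ (∀ i : ℕ, DensityLE (boardOf (l.take i)) d) ∧
    HasMonoCopy F (runPainter π l)

/-- Builder has a winning strategy in the deterministic `F`-avoidance game with `r` colors
and tree size restriction `k`. -/
def BuilderWinsTree {α : Type} (F : SimpleGraph α) (r k : ℕ) : Prop :=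
  ∃ a : ℕ, ∀ π : PainterStrategy (Fin a) r, ∃ l : List (Sym2 (Fin a)),
    ValidEdgeSeq l ∧ (∀ i : ℕ, TreeSizeLE (boardOf (l.take i)) k) ∧
    HasMonoCopy F (runPainter π l)

/-- The Painter strategy `π` on `a` vertices never creates a monochromatic copy of `F`
against any Builder play obeying the tree size restriction `k`. -/
def PainterAvoidsTree {α : Type} (F : SimpleGraph α) (r k a : ℕ)
    (π : PainterStrategy (Fin a) r) : Prop :=
  ∀ l : List (Sym2 (Fin a)), ValidEdgeSeq l →
    (∀ i : ℕ, TreeSizeLE (boardOf (l.take i)) k) →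
    ¬ HasMonoCopy F (runPainter π l)

/-- Painter has a winning strategy in the deterministic `F`-avoidance game with `r` colors
and tree size restriction `k`. -/
def PainterWinsTree {α : Type} (F : SimpleGraph α) (r k : ℕ) : Prop :=
  ∀ a : ℕ, ∃ π : PainterStrategy (Fin a) r, PainterAvoidsTree F r k a π

/-- A sequence of `N` distinct non-loop edges on `n` vertices. -/
def ValidSeqFun {n N : ℕ} (f : Fin N → Sym2 (Fin n)) : Prop :=
  Function.Injective f ∧ ∀ i, ¬ (f i).IsDiag

/-- The probability (with respect to the uniformly random order in which the `N` distinct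
edges of the random process on `n` vertices appear) of the event `P`. -/
noncomputable def onlineProb (n N : ℕ) (P : (Fin N → Sym2 (Fin n)) → Prop) : ℝ :=
  (Set.ncard {f : Fin N → Sym2 (Fin n) | ValidSeqFun f ∧ P f} : ℝ) /
  (Set.ncard {f : Fin N → Sym2 (Fin n) | ValidSeqFun f} : ℝ)

/-- Event: playing the online strategy `π` on the random edge sequence `f` produces
a monochromatic copy of `F`. -/
def OnlineMonoCopy {α : Type} (F : SimpleGraph α) {r n N : ℕ}
    (π : PainterStrategy (Fin n) r) (f : Fin N → Sym2 (Fin n)) : Prop :=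
  HasMonoCopy F (runPainter π (List.ofFn f))

/-- The Painter strategy (colors: `0` = red, `1` = blue): color an edge blue if and only if
it is adjacent to a red edge and coloring it blue does not complete a blue copy of the path
`P_ℓ` with `ℓ` edges; otherwise color it red. -/
noncomputable def blueIfSafeStrategy (ℓ n : ℕ) : PainterStrategy (Fin n) 2 := fun h e =>
  if (∃ e', (e', (0 : Fin 2)) ∈ h ∧ ∃ v, v ∈ e ∧ v ∈ e') ∧
      ¬ IsCopy (SimpleGraph.pathGraph (ℓ + 1))
        (SimpleGraph.fromEdgeSet (insert e {e' | (e', (1 : Fin 2)) ∈ h}))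
  then 1 else 0

/-!
Every blue edge meets an earlier red edge, and a red edge that meets an earlier red edge is red only
because blue paths of total length `ℓ - 1` already ended at its two endpoints; call such a red edge
threatened. Suppose that a red `P_ℓ` appears in a forest, and remove its edges. A blue path of
length `m` starting at one of its vertices then carries at least `⌊m / 2⌋` further red edges, so the
trees left at the two ends of a threatened edge have at least `⌊3 ℓ / 2⌋ - 2` edges together. Of any
two consecutive edges of `P_ℓ` the later one is threatened, and two consecutive threatened edges
even force one edge more in the three trees at their endpoints. Adding these bounds over disjoint
groups of two or three vertices of `P_ℓ`, the tree containing `P_ℓ` has more than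
`⌊(ℓ + 1) / 3⌋ * (⌊3 ℓ / 2⌋ - 4) + 2 (ℓ - 1)` edges.
-/

section Counting

open Finset

/- In the application `c i` is the size of the tree hanging off the `i`-th vertex of a red path, and
`b i` says that the edge from the `i`-th to the next vertex met an earlier red edge. -/
variable {c : ℕ → ℕ} {b : ℕ → Prop} {L W : ℕ}

theorem le_sum_range_of_last
    (pair : ∀ i < L, b i → W + 2 ≤ c i + c (i + 1))
    (triple : ∀ i, i + 1 < L → b i → b (i + 1) → W + 3 ≤ c i + c (i + 1) + c (i + 2))
    (cover : ∀ i, i + 1 < L → b i ∨ b (i + 1)) :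
    ∀ {m : ℕ}, m < L → b m → (m + 3) / 3 * W + (m + 1) ≤ ∑ i ∈ range (m + 2), c i
  | 0, hm, h0 => by
    have pair0 : W + 2 ≤ c 0 + c 1 := pair 0 hm h0
    simp only [sum_range_succ, sum_range_zero, zero_add]
    omega
  | 1, hm, h1 => by
    have pair1 : W + 2 ≤ c 1 + c 2 := pair 1 hm h1
    simp only [sum_range_succ, sum_range_zero, zero_add, Nat.reduceAdd]
    omega
  | 2, hm, h2 => by
    have pair2 : W + 2 ≤ c 2 + c 3 := pair 2 hm h2
    simp only [sum_range_succ, sum_range_zero, zero_add, Nat.reduceAdd]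
    rcases cover 0 (by omega) with h0 | h1
    · have pair0 : W + 2 ≤ c 0 + c 1 := pair 0 (by omega) h0
      omega
    · have triple1 : W + 3 ≤ c 1 + c 2 + c 3 := triple 1 hm h1 h2
      omega
  | m + 3, hm, h3 => by
    have quotient : (m + 3 + 3) / 3 * W = (m + 3) / 3 * W + W := by
      rw [Nat.add_div_right _ (by norm_num), Nat.succ_mul]
    by_cases h1 : b (m + 1)
    · have ih : (m + 4) / 3 * W + (m + 2) ≤ ∑ i ∈ range (m + 3), c i :=
        le_sum_range_of_last pair triple cover (by omega) h1
      have pair3 : W + 2 ≤ c (m + 3) + c (m + 4) := pair (m + 3) hm h3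
      have : (m + 3) / 3 * W ≤ (m + 4) / 3 * W := by gcongr; omega
      rw [sum_range_succ _ (m + 4), sum_range_succ _ (m + 3)]
      omega
    · have h0 := (cover m (by omega)).resolve_right h1
      have h2 := (cover (m + 1) (by omega)).resolve_left h1
      have ih := le_sum_range_of_last pair triple cover (by omega) h0
      have triple2 : W + 3 ≤ c (m + 2) + c (m + 3) + c (m + 4) := triple (m + 2) hm h2 h3
      rw [sum_range_succ _ (m + 4), sum_range_succ _ (m + 3), sum_range_succ _ (m + 2)]
      omega

theorem le_sum_range_of_cover (hL : 2 ≤ L)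
    (pair : ∀ i < L, b i → W + 2 ≤ c i + c (i + 1))
    (triple : ∀ i, i + 1 < L → b i → b (i + 1) → W + 3 ≤ c i + c (i + 1) + c (i + 2))
    (cover : ∀ i, i + 1 < L → b i ∨ b (i + 1)) :
    (L + 1) / 3 * W + (L - 1) ≤ ∑ i ∈ range (L + 1), c i := by
  obtain ⟨m, rfl⟩ := Nat.exists_eq_add_of_le' hL
  change (m + 3) / 3 * W + (m + 1) ≤ ∑ i ∈ range (m + 3), c i
  rcases cover m (by omega) with hm | hm
  · have := le_sum_range_of_last pair triple cover (by omega) hm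
    rw [sum_range_succ]
    omega
  · have : (m + 4) / 3 * W + (m + 2) ≤ ∑ i ∈ range (m + 3), c i :=
      le_sum_range_of_last pair triple cover (by omega) hm
    have : (m + 3) / 3 * W ≤ (m + 4) / 3 * W := by gcongr; omega
    omega

theorem half_le_card_filter_Ico {P : ℕ → Prop} [DecidablePred P] {a d : ℕ}
    (cover : ∀ j, a ≤ j → j + 1 < d → P j ∨ P (j + 1)) :
    (d - a) / 2 ≤ #{j ∈ Ico a d | P j} := by
  let f t := if P (a + 2 * t) then a + 2 * t else a + 2 * t + 1
  have f_bounds t : a + 2 * t ≤ f t ∧ f t ≤ a + 2 * t + 1 := by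
    simp only [f]; split_ifs <;> omega
  rw [← card_range ((d - a) / 2)]
  refine card_le_card_of_injOn f (fun t ht ↦ ?_) fun s _ t _ hst ↦ ?_
  · rw [coe_range, Set.mem_Iio] at ht
    have := f_bounds t
    have : P (f t) := by
      simp only [f]
      split_ifs with h
      exacts [h, (cover _ (by omega) (by omega)).resolve_left h]
    simp only [coe_filter, mem_Ico, Set.mem_ofPred_eq]
    exact ⟨by omega, this⟩
  · have := f_bounds s
    have := f_bounds t
    omega

end Counting

section Paths

variable {V : Type*} {G : SimpleGraph V} {u w x y : V}

theorem pathGraph_isContained_iff {n : ℕ} :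
    pathGraph (n + 1) ⊑ G ↔ ∃ u v, ∃ p : G.Walk u v, p.IsPath ∧ p.length = n := by
  constructor
  · rintro ⟨f⟩
    have chain : (List.ofFn f).IsChain G.Adj := List.isChain_ofFn.2 fun i hi ↦
      f.toHom.map_adj (pathGraph_adj.2 (.inl rfl))
    have ne_nil : List.ofFn f ≠ [] := by simp
    refine ⟨_, _, Walk.ofSupport _ ne_nil chain, ?_, ?_⟩
    · rw [Walk.isPath_def, Walk.support_ofSupport]
      exact List.nodup_ofFn.2 f.injective
    · simp [Walk.length_ofSupport]
  · rintro ⟨u, v, p, hp, rfl⟩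
    exact hp.isContained_pathGraph

theorem exists_isPath_deleteEdges_getVert {p : G.Walk x y} (hp : p.IsPath) {i : ℕ}
    (hi : i < p.length) {e : Sym2 V} (he : e = s(p.getVert i, p.getVert (i + 1))) :
    ∃ (q : (G.deleteEdges {e}).Walk (p.getVert i) x)
      (r : (G.deleteEdges {e}).Walk (p.getVert (i + 1)) y),
      q.IsPath ∧ r.IsPath ∧ q.length + r.length + 1 = p.length := by
  have hi' : i < p.edges.length := by rwa [Walk.length_edges]
  have edge_eq : p.edges[i] = e := he ▸ Walk.getElem_edges hi'
  have notMem_take : e ∉ (p.take i).reverse.edges := by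
    rw [Walk.edges_reverse, List.mem_reverse, Walk.edges_take, List.mem_take_iff_getElem]
    rintro ⟨j, hj, hje⟩
    have := (hp.isTrail.edges_nodup.getElem_inj_iff).1 (hje.trans edge_eq.symm)
    omega
  have notMem_drop : e ∉ (p.drop (i + 1)).edges := by
    rw [Walk.edges_drop, List.mem_drop_iff_getElem]
    rintro ⟨j, hj, hje⟩
    have := (hp.isTrail.edges_nodup.getElem_inj_iff).1 (hje.trans edge_eq.symm)
    omega
  refine ⟨(p.take i).reverse.toDeleteEdge e notMem_take,
    (p.drop (i + 1)).toDeleteEdge e notMem_drop,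
    (hp.take i).reverse.transfer _, (hp.drop (i + 1)).transfer _, ?_⟩
  simp only [Walk.toDeleteEdge, Walk.toDeleteEdges, Walk.length_transfer, Walk.length_reverse,
    Walk.take_length, Walk.drop_length]
  omega

theorem exists_isPath_deleteEdges_of_mem_edges {p : G.Walk x y} (hp : p.IsPath)
    (h : s(u, w) ∈ p.edges) :
    ∃ (a b : V) (q : (G.deleteEdges {s(u, w)}).Walk u a) (r : (G.deleteEdges {s(u, w)}).Walk w b),
      q.IsPath ∧ r.IsPath ∧ q.length + r.length + 1 = p.length := by
  obtain ⟨i, hi, he⟩ := p.mk_mem_edges_iff_exists.1 h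
  obtain ⟨q, r, hq, hr, hlen⟩ := exists_isPath_deleteEdges_getVert hp hi he.symm
  rcases Sym2.eq_iff.1 he with ⟨rfl, rfl⟩ | ⟨rfl, rfl⟩
  · exact ⟨_, _, q, r, hq, hr, hlen⟩
  · exact ⟨_, _, r, q, hr, hq, by omega⟩

theorem exists_isPath_of_isContained_insert {ℓ : ℕ} {E : Set (Sym2 V)}
    (hE : ¬ pathGraph (ℓ + 1) ⊑ fromEdgeSet E)
    (h : pathGraph (ℓ + 1) ⊑ fromEdgeSet (insert s(u, w) E)) :
    ∃ (a b : V) (q : (fromEdgeSet E).Walk u a) (r : (fromEdgeSet E).Walk w b),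
      q.IsPath ∧ r.IsPath ∧ q.length + r.length + 1 = ℓ := by
  have delete_le : (fromEdgeSet (insert s(u, w) E)).deleteEdges {s(u, w)} ≤ fromEdgeSet E := by
    rw [deleteEdges_fromEdgeSet]
    refine fromEdgeSet_mono fun e he ↦ he.1.resolve_left he.2
  obtain ⟨x, y, p, hp, rfl⟩ := pathGraph_isContained_iff.1 h
  have mem_edges : s(u, w) ∈ p.edges := by
    by_contra notMem
    refine hE (pathGraph_isContained_iff.2
      ⟨x, y, (p.toDeleteEdge _ notMem).mapLe delete_le, (hp.transfer _).mapLe _, ?_⟩)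
    simp [Walk.toDeleteEdge, Walk.toDeleteEdges]
  obtain ⟨a, b, q, r, hq, hr, hlen⟩ := exists_isPath_deleteEdges_of_mem_edges hp mem_edges
  refine ⟨a, b, q.mapLe delete_le, r.mapLe delete_le, hq.mapLe _, hr.mapLe _, ?_⟩
  simpa only [Walk.length_mapLe] using hlen

end Paths

section Components

variable {V : Type*} {G H : SimpleGraph V} {u v w x : V}

/-- The edges of the component of `v` in `G`, as a set of edges of the ambient vertex type. -/
def componentEdges (G : SimpleGraph V) (v : V) : Set (Sym2 V) :=
  G.edgeSet ∩ {e | ∀ x ∈ e, x ∈ (G.connectedComponentMk v).supp}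

theorem mem_componentEdges {e : Sym2 V} (he : e ∈ G.edgeSet) (hx : x ∈ e)
    (hvx : G.Reachable v x) : e ∈ componentEdges G v := by
  refine ⟨he, fun y hy ↦ ?_⟩
  suffices G.Reachable x y from (ConnectedComponent.eq.2 (hvx.trans this)).symm
  by_cases hxy : x = y
  · rw [hxy]
  · rw [(Sym2.mem_and_mem_iff hxy).1 ⟨hx, hy⟩] at he
    exact Adj.reachable he

theorem componentEdges_eq_of_reachable (h : G.Reachable v w) :
    componentEdges G v = componentEdges G w := by
  rw [componentEdges, componentEdges, ConnectedComponent.eq.2 h]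

theorem componentEdges_mono (h : G ≤ H) : componentEdges G v ⊆ componentEdges H v :=
  fun _ he ↦ ⟨edgeSet_mono h he.1, fun x hx ↦
    ConnectedComponent.eq.2 ((ConnectedComponent.eq.1 (he.2 x hx)).mono h)⟩

theorem edgeSet_subset_componentEdges (p : G.Walk u v) : p.edgeSet ⊆ componentEdges G u :=
  fun e he ↦ mem_componentEdges (p.edges_subset_edgeSet he) e.out_fst_mem
    ⟨p.takeUntil _ (p.mem_support_of_mem_edges he e.out_fst_mem)⟩

theorem edgeSet_mapLe (h : G ≤ H) (p : G.Walk u v) : (p.mapLe h).edgeSet = p.edgeSet := by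
  ext e
  rw [Walk.mem_edgeSet, Walk.mem_edgeSet, Walk.edges_mapLe_eq_edges]

theorem ncard_edgeSet_of_isPath {p : G.Walk u v} (hp : p.IsPath) :
    p.edgeSet.ncard = p.length := by
  rw [← Walk.coe_edges_toFinset, Set.ncard_coe_finset,
    List.toFinset_card_of_nodup hp.isTrail.edges_nodup, Walk.length_edges]

theorem disjoint_componentEdges (h : ¬ G.Reachable v w) :
    Disjoint (componentEdges G v) (componentEdges G w) := by
  refine Set.disjoint_left.2 fun e hv hw ↦ h ?_
  have hx := e.out_fst_mem
  exact (ConnectedComponent.eq.1 (hv.2 _ hx)).symm.trans (ConnectedComponent.eq.1 (hw.2 _ hx))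

theorem ncard_componentEdges_le_of_treeSizeLE {V : Type} {G : SimpleGraph V} {k : ℕ}
    (h : TreeSizeLE G k) (v : V) : (componentEdges G v).ncard ≤ k :=
  h.2 _ (G.connectedComponentMk v).connected_toSimpleGraph

end Components

section Acyclic

open scoped Finset

variable {V : Type*} {G H R B : SimpleGraph V} {u v w x y : V}

theorem eq_of_reachable_deleteEdges (hG : G.IsAcyclic) {p : G.Walk u v}
    (hx : x ∈ p.support) (hy : y ∈ p.support)
    (hxy : (G.deleteEdges p.edgeSet).Reachable x y) : x = y := by
  obtain ⟨q, hq⟩ := hxy.exists_isPath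
  let r := ((p.takeUntil x hx).reverse.append (p.takeUntil y hy)).bypass
  have edges_r : ∀ e ∈ r.edges, e ∈ p.edges := fun e he ↦ by
    have := Walk.edges_bypass_subset_edges _ he
    rw [Walk.edges_append, Walk.edges_reverse, List.mem_append, List.mem_reverse] at this
    exact this.elim (p.edges_takeUntil_subset_edges hx ·) (p.edges_takeUntil_subset_edges hy ·)
  have path_eq : q.mapLe (deleteEdges_le _) = r := congrArg Subtype.val <|
    (hG.subsingleton_path x y).elim ⟨_, hq.mapLe _⟩ ⟨_, Walk.bypass_isPath _⟩
  have no_edges : q.edges = [] := List.eq_nil_iff_forall_not_mem.2 fun e he ↦ by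
    have he_p : e ∈ p.edges := edges_r e (by rwa [← path_eq, Walk.edges_mapLe_eq_edges])
    have he_q := q.edges_subset_edgeSet he
    rw [edgeSet_deleteEdges] at he_q
    exact he_q.2 he_p
  exact Walk.eq_of_length_eq_zero (p := q) (by rw [← Walk.length_edges, no_edges, List.length_nil])

theorem pairwiseDisjoint_componentEdges_getVert (hG : G.IsAcyclic) {p : G.Walk u v}
    (hp : p.IsPath) (hH : H ≤ G.deleteEdges p.edgeSet) :
    (Finset.range (p.length + 1) : Set ℕ).PairwiseDisjoint
      fun i ↦ componentEdges H (p.getVert i) := by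
  have le_length {i} (hi : i ∈ (Finset.range (p.length + 1) : Set ℕ)) : i ≤ p.length :=
    Nat.lt_succ_iff.1 (Finset.mem_range.1 hi)
  refine fun i hi j hj hij ↦ disjoint_componentEdges fun h ↦ hij ?_
  exact hp.getVert_injOn (le_length hi) (le_length hj) <| eq_of_reachable_deleteEdges hG
    (p.getVert_mem_support i) (p.getVert_mem_support j) (h.mono hH)

theorem length_add_sum_ncard_componentEdges_le [Finite V] (hG : G.IsAcyclic) {p : G.Walk u v}
    (hp : p.IsPath) (hH : H ≤ G.deleteEdges p.edgeSet) :
    p.length + ∑ i ∈ Finset.range (p.length + 1), (componentEdges H (p.getVert i)).ncard ≤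
      (componentEdges G u).ncard := by
  have disjoint_path : Disjoint p.edgeSet
      (⋃ i ∈ Finset.range (p.length + 1), componentEdges H (p.getVert i)) := by
    refine Set.disjoint_iUnion₂_right.2 fun i _ ↦ Set.disjoint_left.2 fun e he heC ↦ ?_
    have he_H := edgeSet_mono hH heC.1
    rw [edgeSet_deleteEdges] at he_H
    exact he_H.2 he
  have subset_component (i : ℕ) : componentEdges H (p.getVert i) ⊆ componentEdges G u := by
    rw [componentEdges_eq_of_reachable ⟨p.take i⟩]
    exact componentEdges_mono (hH.trans (deleteEdges_le _))
  have ncard_components :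
      (⋃ i ∈ Finset.range (p.length + 1), componentEdges H (p.getVert i)).ncard =
        ∑ i ∈ Finset.range (p.length + 1), (componentEdges H (p.getVert i)).ncard :=
    ((Finset.finite_toSet _).ncard_biUnion (fun _ _ ↦ Set.toFinite _)
      (pairwiseDisjoint_componentEdges_getVert hG hp hH)).trans (finsum_mem_coe_finset _ _)
  calc p.length + ∑ i ∈ Finset.range (p.length + 1), (componentEdges H (p.getVert i)).ncard
      = p.edgeSet.ncard +
          (⋃ i ∈ Finset.range (p.length + 1), componentEdges H (p.getVert i)).ncard := by
        rw [ncard_edgeSet_of_isPath hp, ncard_components]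
    _ = (p.edgeSet ∪ ⋃ i ∈ Finset.range (p.length + 1), componentEdges H (p.getVert i)).ncard :=
        (Set.ncard_union_eq disjoint_path).symm
    _ ≤ (componentEdges G u).ncard := Set.ncard_le_ncard <|
        Set.union_subset (edgeSet_subset_componentEdges p)
          (Set.iUnion₂_subset fun i _ ↦ subset_component i)

theorem not_reachable_of_adj_of_disjoint (hG : (R ⊔ B).IsAcyclic) (hRB : Disjoint R B)
    (hR : R.Adj u w) : ¬ B.Reachable u w := by
  have bridge := isAcyclic_iff_forall_adj_isBridge.1 hG (Or.inl hR : (R ⊔ B).Adj u w)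
  rw [isBridge_iff] at bridge
  have : Disjoint B.edgeSet {s(u, w)} :=
    Set.disjoint_singleton_right.2 fun hB ↦ disjoint_left.1 hRB _ _ hR hB
  exact fun h ↦ bridge <|
    h.mono ((deleteEdges_eq_self.2 this).ge.trans (deleteEdges_mono le_sup_right))

theorem length_add_card_support_le_ncard_componentEdges [Finite V] (hG : (R ⊔ B).IsAcyclic)
    (hRB : Disjoint R B) {q : B.Walk u v} (hq : q.IsPath) :
    q.length + #{j ∈ Finset.range (q.length + 1) | q.getVert j ∈ R.support} ≤
      (componentEdges (R ⊔ B) u).ncard := by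
  choose! f hf using fun x (hx : x ∈ R.support) ↦ (mem_support R).1 hx
  let e j := s(q.getVert j, f (q.getVert j))
  let J : Finset ℕ := {j ∈ Finset.range (q.length + 1) | q.getVert j ∈ R.support}
  have mem_J {j} (hj : j ∈ J) : j ≤ q.length ∧ R.Adj (q.getVert j) (f (q.getVert j)) := by
    rw [Finset.mem_filter, Finset.mem_range_succ_iff] at hj
    exact ⟨hj.1, hf _ hj.2⟩
  have reachable j : B.Reachable u (q.getVert j) := ⟨q.take j⟩
  have injOn_e : Set.InjOn e J := by
    intro i hi j hj hij
    rcases Sym2.eq_iff.1 hij with h | h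
    · exact hq.getVert_injOn (mem_J hi).1 (mem_J hj).1 h.1
    · exact absurd ((reachable i).symm.trans (h.2 ▸ reachable j))
        (not_reachable_of_adj_of_disjoint hG hRB (mem_J hi).2)
  have disjoint_q : Disjoint q.edgeSet (e '' J) := by
    refine Set.disjoint_left.2 ?_
    rintro _ hq ⟨j, hj, rfl⟩
    exact disjoint_left.1 hRB _ _ (mem_J hj).2 (q.edges_subset_edgeSet hq)
  have subset_component : q.edgeSet ∪ e '' J ⊆ componentEdges (R ⊔ B) u := by
    refine Set.union_subset
      ((edgeSet_subset_componentEdges q).trans (componentEdges_mono le_sup_right)) ?_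
    rintro _ ⟨j, hj, rfl⟩
    exact mem_componentEdges (.inl (mem_J hj).2) (Sym2.mem_mk_left ..)
      ((reachable j).mono le_sup_right)
  calc q.length + #J = q.edgeSet.ncard + (e '' J).ncard := by
        rw [ncard_edgeSet_of_isPath hq, injOn_e.ncard_image, Set.ncard_coe_finset]
    _ = (q.edgeSet ∪ e '' J).ncard := (Set.ncard_union_eq disjoint_q).symm
    _ ≤ (componentEdges (R ⊔ B) u).ncard := Set.ncard_le_ncard subset_component

end Acyclic

section Greedy

open Finset

variable {V : Type*} {ℓ : ℕ} {R B : SimpleGraph V} {τ : Sym2 V → ℕ} {v w x y z : V}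

/-- The edge `e` meets an edge of `R` that came before it in the order `τ` of presentation. -/
def HasEarlierNeighbor (R : SimpleGraph V) (τ : Sym2 V → ℕ) (e : Sym2 V) : Prop :=
  ∃ e' ∈ R.edgeSet, τ e' < τ e ∧ ∃ x, x ∈ e ∧ x ∈ e'

/-- When the edge `uw` was presented, two paths of `B` starting at `u` and `w` were already there
that `uw` would have joined to a path with `ℓ` edges. -/
def IsThreatened (ℓ : ℕ) (B : SimpleGraph V) (τ : Sym2 V → ℕ) (u w : V) : Prop :=
  ∃ (x y : V) (q : B.Walk u x) (r : B.Walk w y), q.IsPath ∧ r.IsPath ∧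
    q.length + r.length + 1 = ℓ ∧ ∀ e ∈ q.edges ++ r.edges, τ e < τ s(u, w)

/-- The red-blue colorings of a forest with red part `R` and blue part `B` that the greedy Painter
produces, with `τ` recording when each edge was presented. The condition that no blue `P_ℓ` occurs
is not included; only its consequence for red edges matters for the count. -/
structure IsGreedyColoring (ℓ : ℕ) (R B : SimpleGraph V) (τ : Sym2 V → ℕ) : Prop where
  isAcyclic : (R ⊔ B).IsAcyclic
  disjoint : Disjoint R B
  injOn : Set.InjOn τ R.edgeSet
  hasEarlierNeighbor_of_blue : ∀ e ∈ B.edgeSet, HasEarlierNeighbor R τ e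
  isThreatened_of_red : ∀ u w, R.Adj u w → HasEarlierNeighbor R τ s(u, w) → IsThreatened ℓ B τ u w

/-- The number of edges of the component hanging off the `i`-th vertex of the red path `p` once the
edges of `p` are removed from the board. -/
noncomputable def hangingSize (B : SimpleGraph V) (p : R.Walk x y) (i : ℕ) : ℕ :=
  (componentEdges (R.deleteEdges p.edgeSet ⊔ B) (p.getVert i)).ncard

theorem eq_of_mem_edges_of_getVert_mem {p : R.Walk x y} (hp : p.IsPath) {i : ℕ}
    (hi : i + 1 < p.length) {e : Sym2 V} (he : e ∈ p.edges) (hv : p.getVert (i + 1) ∈ e) :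
    e = s(p.getVert i, p.getVert (i + 1)) ∨ e = s(p.getVert (i + 1), p.getVert (i + 2)) := by
  induction e with | _ a b
  obtain ⟨j, hj, hje⟩ := p.mk_mem_edges_iff_exists.1 he
  rw [← hje, Sym2.mem_iff] at hv
  rw [← hje]
  rcases hv with hv | hv
  · obtain rfl : i + 1 = j := hp.getVert_injOn hi.le hj.le hv
    exact .inr rfl
  · obtain rfl : i = j := Nat.succ_injective (hp.getVert_injOn hi.le hj hv)
    exact .inl rfl

namespace IsGreedyColoring

theorem deleteEdges_sup_le (h : IsGreedyColoring ℓ R B τ) (p : R.Walk x y) :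
    R.deleteEdges p.edgeSet ⊔ B ≤ (R ⊔ B).deleteEdges p.edgeSet := by
  have : Disjoint B.edgeSet p.edgeSet :=
    ((disjoint_edgeSet.2 h.disjoint).mono_left p.edges_subset_edgeSet).symm
  rw [deleteEdges_sup, deleteEdges_eq_self.2 this]

theorem mem_support_deleteEdges (h : IsGreedyColoring ℓ R B τ) {p : R.Walk x y}
    (hv : v ∈ p.support) (hvw : B.Reachable v w) {e : Sym2 V} (he : e ∈ R.edgeSet) (hw : w ∈ e)
    (hvertex : w = v → e ∉ p.edges) : w ∈ (R.deleteEdges p.edgeSet).support := by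
  have notMem : e ∉ p.edges := fun hep ↦ by
    refine hvertex ?_ hep
    have reachable := hvw.mono (le_sup_right.trans (h.deleteEdges_sup_le p))
    rw [← edgeSet_mapLe (le_sup_left : R ≤ R ⊔ B)] at reachable
    refine (eq_of_reachable_deleteEdges h.isAcyclic ?_ ?_ reachable).symm
    · rwa [Walk.support_mapLe_eq_support]
    · rw [Walk.support_mapLe_eq_support]
      exact p.mem_support_of_mem_edges hep hw
  obtain ⟨z, rfl⟩ := hw
  exact (mem_support _).2 ⟨z, deleteEdges_adj.2 ⟨he, notMem⟩⟩

theorem getVert_mem_support_or (h : IsGreedyColoring ℓ R B τ) {p : R.Walk x y}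
    (hv : v ∈ p.support) {q : B.Walk v z} (hq : q.IsPath) {j : ℕ} (hj : j < q.length)
    (hstart : j = 0 → ∀ e ∈ p.edges, v ∈ e → ∀ f ∈ q.edges, τ f < τ e) :
    q.getVert j ∈ (R.deleteEdges p.edgeSet).support ∨
      q.getVert (j + 1) ∈ (R.deleteEdges p.edgeSet).support := by
  have mem_edges : s(q.getVert j, q.getVert (j + 1)) ∈ q.edges :=
    q.mk_mem_edges_iff_exists.2 ⟨j, hj, rfl⟩
  obtain ⟨e, he, earlier, w, hw, hwe⟩ :=
    h.hasEarlierNeighbor_of_blue _ (q.edges_subset_edgeSet mem_edges)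
  have getVert_ne {k : ℕ} (hk : k ≤ q.length) (hkv : q.getVert k = v) : k = 0 :=
    hq.getVert_injOn hk (Nat.zero_le _) (hkv.trans q.getVert_zero.symm)
  rcases Sym2.mem_iff.1 hw with rfl | rfl
  · refine .inl (h.mem_support_deleteEdges hv ⟨q.take j⟩ he hwe fun hjv hep ↦ ?_)
    exact (hstart (getVert_ne hj.le hjv) e hep (hjv ▸ hwe) _ mem_edges).not_gt earlier
  · refine .inr (h.mem_support_deleteEdges hv ⟨q.take (j + 1)⟩ he hwe fun hjv _ ↦ ?_)
    exact Nat.succ_ne_zero j (getVert_ne hj hjv)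

theorem length_add_card_support_le_hangingSize [Finite V] (h : IsGreedyColoring ℓ R B τ)
    (p : R.Walk x y) (i : ℕ) {q : B.Walk (p.getVert i) z} (hq : q.IsPath) :
    q.length + #{j ∈ range (q.length + 1) | q.getVert j ∈ (R.deleteEdges p.edgeSet).support} ≤
      hangingSize B p i :=
  length_add_card_support_le_ncard_componentEdges
    (h.isAcyclic.anti ((h.deleteEdges_sup_le p).trans (deleteEdges_le _)))
    (h.disjoint.mono_left (deleteEdges_le _)) hq

theorem length_add_half_le_hangingSize [Finite V] (h : IsGreedyColoring ℓ R B τ) (p : R.Walk x y)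
    (i : ℕ) {q : B.Walk (p.getVert i) z} (hq : q.IsPath) :
    q.length + q.length / 2 ≤ hangingSize B p i := by
  have count := h.length_add_card_support_le_hangingSize p i hq
  have half := half_le_card_filter_Ico (a := 1) (d := q.length + 1)
    (P := fun j ↦ q.getVert j ∈ (R.deleteEdges p.edgeSet).support) fun j hj hj' ↦
    h.getVert_mem_support_or (p.getVert_mem_support i) hq (by omega) fun hj0 ↦ by omega
  have : #{j ∈ Ico 1 (q.length + 1) | q.getVert j ∈ (R.deleteEdges p.edgeSet).support} ≤
      #{j ∈ range (q.length + 1) | q.getVert j ∈ (R.deleteEdges p.edgeSet).support} := by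
    rw [range_eq_Ico]
    gcongr
    exact zero_le_one
  omega

theorem length_add_half_succ_le_hangingSize [Finite V] (h : IsGreedyColoring ℓ R B τ)
    (p : R.Walk x y) (i : ℕ) {q : B.Walk (p.getVert i) z} (hq : q.IsPath)
    (earlier : ∀ e ∈ p.edges, p.getVert i ∈ e → ∀ f ∈ q.edges, τ f < τ e) :
    q.length + (q.length + 1) / 2 ≤ hangingSize B p i := by
  have count := h.length_add_card_support_le_hangingSize p i hq
  have half := half_le_card_filter_Ico (a := 0) (d := q.length + 1)
    (P := fun j ↦ q.getVert j ∈ (R.deleteEdges p.edgeSet).support) fun j _ hj' ↦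
    h.getVert_mem_support_or (p.getVert_mem_support i) hq (by omega) fun _ ↦ earlier
  rw [← range_eq_Ico] at half
  omega

theorem isThreatened_getVert (h : IsGreedyColoring ℓ R B τ) {p : R.Walk x y} {i : ℕ}
    (hi : i < p.length) (hb : HasEarlierNeighbor R τ s(p.getVert i, p.getVert (i + 1))) :
    IsThreatened ℓ B τ (p.getVert i) (p.getVert (i + 1)) :=
  h.isThreatened_of_red _ _ (p.adj_getVert_succ hi) hb

theorem hasEarlierNeighbor_or (h : IsGreedyColoring ℓ R B τ) {p : R.Walk x y} (hp : p.IsPath)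
    {i : ℕ} (hi : i + 1 < p.length) :
    HasEarlierNeighbor R τ s(p.getVert i, p.getVert (i + 1)) ∨
      HasEarlierNeighbor R τ s(p.getVert (i + 1), p.getVert (i + 2)) := by
  have fst_mem : s(p.getVert i, p.getVert (i + 1)) ∈ R.edgeSet := p.adj_getVert_succ (by omega)
  have snd_mem : s(p.getVert (i + 1), p.getVert (i + 2)) ∈ R.edgeSet := p.adj_getVert_succ hi
  have hne : s(p.getVert i, p.getVert (i + 1)) ≠ s(p.getVert (i + 1), p.getVert (i + 2)) := by
    rw [Sym2.eq_swap, Ne, Sym2.congr_right]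
    intro hij
    have := hp.getVert_injOn (i.le_add_right 2 |>.trans hi) hi hij
    omega
  rcases lt_or_gt_of_ne (h.injOn.ne fst_mem snd_mem hne) with hlt | hlt
  · exact .inr ⟨_, fst_mem, hlt, _, Sym2.mem_mk_left .., Sym2.mem_mk_right ..⟩
  · exact .inl ⟨_, snd_mem, hlt, _, Sym2.mem_mk_right .., Sym2.mem_mk_left ..⟩

theorem add_two_le_hangingSize_pair [Finite V] (h : IsGreedyColoring ℓ R B τ) (hℓ : 3 ≤ ℓ)
    {p : R.Walk x y} {i : ℕ} (hi : i < p.length)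
    (hb : HasEarlierNeighbor R τ s(p.getVert i, p.getVert (i + 1))) :
    3 * ℓ / 2 - 4 + 2 ≤ hangingSize B p i + hangingSize B p (i + 1) := by
  obtain ⟨_, _, q, r, hq, hr, hlen, -⟩ := h.isThreatened_getVert hi hb
  have := h.length_add_half_le_hangingSize p i hq
  have := h.length_add_half_le_hangingSize p (i + 1) hr
  omega

theorem add_three_le_hangingSize_of_walks [Finite V] (h : IsGreedyColoring ℓ R B τ) (hℓ : 3 ≤ ℓ)
    {p : R.Walk x y} (hp : p.IsPath) {i : ℕ} (hi : i + 1 < p.length)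
    {q : B.Walk (p.getVert (i + 1)) w} {r : B.Walk (p.getVert (i + 1)) z}
    (hq : q.IsPath) (hr : r.IsPath) (hqlen : q.length + 1 = ℓ) (hrlen : r.length + 1 = ℓ)
    (hqτ : ∀ f ∈ q.edges, τ f < τ s(p.getVert i, p.getVert (i + 1)))
    (hrτ : ∀ f ∈ r.edges, τ f < τ s(p.getVert (i + 1), p.getVert (i + 2))) :
    3 * ℓ / 2 - 4 + 3 ≤ hangingSize B p (i + 1) := by
  rcases le_total (τ s(p.getVert i, p.getVert (i + 1)))
    (τ s(p.getVert (i + 1), p.getVert (i + 2))) with hle | hle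
  · have := h.length_add_half_succ_le_hangingSize p (i + 1) hq fun e he hv f hf ↦ by
      rcases eq_of_mem_edges_of_getVert_mem hp hi he hv with rfl | rfl
      exacts [hqτ f hf, (hqτ f hf).trans_le hle]
    omega
  · have := h.length_add_half_succ_le_hangingSize p (i + 1) hr fun e he hv f hf ↦ by
      rcases eq_of_mem_edges_of_getVert_mem hp hi he hv with rfl | rfl
      exacts [(hrτ f hf).trans_le hle, hrτ f hf]
    omega

theorem add_three_le_hangingSize_triple [Finite V] (h : IsGreedyColoring ℓ R B τ) (hℓ : 3 ≤ ℓ)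
    {p : R.Walk x y} (hp : p.IsPath) {i : ℕ} (hi : i + 1 < p.length)
    (hb : HasEarlierNeighbor R τ s(p.getVert i, p.getVert (i + 1)))
    (hb' : HasEarlierNeighbor R τ s(p.getVert (i + 1), p.getVert (i + 2))) :
    3 * ℓ / 2 - 4 + 3 ≤ hangingSize B p i + hangingSize B p (i + 1) + hangingSize B p (i + 2) := by
  obtain ⟨_, _, q₀, q₁, hq₀, hq₁, hqlen, hqτ⟩ := h.isThreatened_getVert (by omega) hb
  obtain ⟨_, _, r₁, r₂, hr₁, hr₂, hrlen, hrτ⟩ := h.isThreatened_getVert hi hb'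
  have pair := h.add_two_le_hangingSize_pair hℓ (by omega) hb
  have pair' := h.add_two_le_hangingSize_pair hℓ hi hb'
  have left := h.length_add_half_le_hangingSize p i hq₀
  have right := h.length_add_half_le_hangingSize p (i + 2) hr₂
  simp only [add_assoc, Nat.reduceAdd] at pair' ⊢
  -- If both outer blue paths are empty, the two inner ones start at the middle vertex, and the one
  -- belonging to the earlier red edge precedes both red edges there.
  by_cases hzero : q₀.length = 0 ∧ r₂.length = 0
  · have := h.add_three_le_hangingSize_of_walks hℓ hp hi hq₁ hr₁ (by omega) (by omega)
      (fun f hf ↦ hqτ f (List.mem_append_right _ hf)) fun f hf ↦ hrτ f (List.mem_append_left _ hf)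
    omega
  · omega

theorem lt_ncard_componentEdges [Finite V] (h : IsGreedyColoring ℓ R B τ) (hℓ : 3 ≤ ℓ)
    {p : R.Walk x y} (hp : p.IsPath) (hlen : p.length = ℓ) :
    (ℓ + 1) / 3 * (3 * ℓ / 2 - 4) + 2 * (ℓ - 1) < (componentEdges (R ⊔ B) x).ncard := by
  have sum_le : p.length + ∑ i ∈ range (p.length + 1), hangingSize B p i ≤
      (componentEdges (R ⊔ B) x).ncard := by
    have := length_add_sum_ncard_componentEdges_le h.isAcyclic
      (hp.mapLe (le_sup_left : R ≤ R ⊔ B))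
      ((h.deleteEdges_sup_le p).trans_eq (by rw [edgeSet_mapLe]))
    simpa only [hangingSize, Walk.length_mapLe, Walk.mapLe, Walk.getVert_map, Hom.coe_ofLE, id_eq]
      using this
  have le_sum := le_sum_range_of_cover (c := hangingSize B p) (by omega)
    (fun i hi hb ↦ h.add_two_le_hangingSize_pair hℓ hi hb)
    (fun i hi hb hb' ↦ h.add_three_le_hangingSize_triple hℓ hp hi hb hb')
    fun i hi ↦ h.hasEarlierNeighbor_or hp hi
  rw [hlen] at sum_le le_sum
  omega

end IsGreedyColoring
end Greedy

section Play

variable {V : Type} {r : ℕ} (π : PainterStrategy V r) (l : List (Sym2 V)) {e : Sym2 V} {c : Fin r}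

theorem runPainterAux_concat (h : EdgeHistory V r) (e : Sym2 V) :
    runPainterAux π h (l ++ [e]) =
      runPainterAux π h l ++ [(e, π (runPainterAux π h l) e)] := by
  induction l generalizing h with
  | nil => rfl
  | cons _ _ ih => exact ih _

theorem runPainter_concat (e : Sym2 V) :
    runPainter π (l ++ [e]) = runPainter π l ++ [(e, π (runPainter π l) e)] :=
  runPainterAux_concat π l [] e

theorem mem_runPainter_iff [DecidableEq V] {l : List (Sym2 V)} (hl : l.Nodup) :
    (e, c) ∈ runPainter π l ↔ e ∈ l ∧ π (runPainter π (l.take (l.idxOf e))) e = c := by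
  induction l using List.reverseRecOn with
  | nil => simp [runPainter, runPainterAux]
  | append_singleton l x ih =>
    obtain ⟨hl, -, hx⟩ := List.nodup_append'.1 hl
    rw [runPainter_concat, List.mem_append, ih hl, List.mem_append]
    by_cases he : e ∈ l
    · have hex : e ≠ x := fun h ↦ hx he (by simp [h])
      have take_eq : (l ++ [x]).take ((l ++ [x]).idxOf e) = l.take (l.idxOf e) := by
        rw [List.idxOf_append_of_mem he, List.take_append_of_le_length List.idxOf_le_length]
      simp [he, hex, take_eq]
    · by_cases hex : e = x
      · subst hex
        simp [he, List.idxOf_append_of_notMem he, eq_comm]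
      · simp [he, hex]

theorem mem_runPainter_take_iff [DecidableEq V] {l : List (Sym2 V)} (hl : l.Nodup) {n : ℕ} :
    (e, c) ∈ runPainter π (l.take n) ↔ (e, c) ∈ runPainter π l ∧ l.idxOf e < n := by
  rw [mem_runPainter_iff π (hl.sublist (List.take_sublist ..)), mem_runPainter_iff π hl]
  by_cases he : e ∈ l.take n
  · have idx_lt : l.idxOf e < n := (List.mem_take_iff_idxOf_lt (List.mem_of_mem_take he)).1 he
    have idx_eq : (l.take n).idxOf e = l.idxOf e :=
      (List.take_prefix n l).idxOf_eq_of_mem he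
    rw [idx_eq, List.take_take, min_eq_left idx_lt.le]
    simp [he, idx_lt, List.mem_of_mem_take he]
  · have := fun hel ↦ mt (List.mem_take_iff_idxOf_lt hel).2 he
    tauto

theorem map_fst_runPainter : (runPainter π l).map Prod.fst = l := by
  induction l using List.reverseRecOn with
  | nil => rfl
  | append_singleton l e ih => rw [runPainter_concat, List.map_append, ih]; rfl

theorem exists_mem_runPainter_iff : (∃ c, (e, c) ∈ runPainter π l) ↔ e ∈ l := by
  conv_rhs => rw [← map_fst_runPainter π l]
  simp only [List.mem_map, Prod.exists, exists_and_right, exists_eq_right]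

theorem colorGraph_zero_sup_colorGraph_one (π : PainterStrategy V 2) :
    colorGraph (runPainter π l) 0 ⊔ colorGraph (runPainter π l) 1 = boardOf l := by
  rw [colorGraph, colorGraph, boardOf, ← fromEdgeSet_union]
  congr 1
  ext e
  exact Fin.exists_fin_two.symm.trans (exists_mem_runPainter_iff π l)

theorem mem_edgeSet_colorGraph_runPainter {l : List (Sym2 V)} (hl : ValidEdgeSeq l) :
    e ∈ (colorGraph (runPainter π l) c).edgeSet ↔ (e, c) ∈ runPainter π l := by
  rw [colorGraph, edgeSet_fromEdgeSet]
  exact and_iff_left_of_imp fun he ↦ hl.2 e ((exists_mem_runPainter_iff π l).1 ⟨c, he⟩)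

theorem hasEarlierNeighbor_colorGraph_iff [DecidableEq V] {l : List (Sym2 V)}
    (hl : ValidEdgeSeq l) :
    HasEarlierNeighbor (colorGraph (runPainter π l) c) l.idxOf e ↔
      ∃ e', (e', c) ∈ runPainter π (l.take (l.idxOf e)) ∧ ∃ v, v ∈ e ∧ v ∈ e' := by
  simp only [HasEarlierNeighbor, mem_edgeSet_colorGraph_runPainter π hl,
    mem_runPainter_take_iff π hl.1, and_assoc]

theorem isThreatened_colorGraph_of_isContained_insert [DecidableEq V] {l : List (Sym2 V)}
    (hl : ValidEdgeSeq l) {ℓ : ℕ} {u w : V}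
    (safe : ¬ pathGraph (ℓ + 1) ⊑ colorGraph (runPainter π (l.take (l.idxOf s(u, w)))) c)
    (threat : pathGraph (ℓ + 1) ⊑ fromEdgeSet
      (insert s(u, w) {e | (e, c) ∈ runPainter π (l.take (l.idxOf s(u, w)))})) :
    IsThreatened ℓ (colorGraph (runPainter π l) c) l.idxOf u w := by
  let E : Set (Sym2 V) := {e | (e, c) ∈ runPainter π (l.take (l.idxOf s(u, w)))}
  obtain ⟨a, b, q, r, hq, hr, hlen⟩ := exists_isPath_of_isContained_insert (E := E) safe threat
  have mem_edgeSet {e} (he : e ∈ (fromEdgeSet E).edgeSet) :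
      e ∈ (colorGraph (runPainter π l) c).edgeSet ∧ l.idxOf e < l.idxOf s(u, w) := by
    rw [mem_edgeSet_colorGraph_runPainter π hl, ← mem_runPainter_take_iff π hl.1]
    exact (edgeSet_fromEdgeSet E ▸ he).1
  have hle : fromEdgeSet E ≤ colorGraph (runPainter π l) c :=
    edgeSet_subset_edgeSet.1 fun e he ↦ (mem_edgeSet he).1
  refine ⟨a, b, q.mapLe hle, r.mapLe hle, hq.mapLe hle, hr.mapLe hle, ?_, fun e he ↦ ?_⟩
  · simpa only [Walk.length_mapLe] using hlen
  · rw [Walk.edges_mapLe_eq_edges, Walk.edges_mapLe_eq_edges, List.mem_append] at he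
    exact (mem_edgeSet (he.elim (q.edges_subset_edgeSet ·) (r.edges_subset_edgeSet ·))).2

end Play

section BlueIfSafe

variable {ℓ n : ℕ} {h : EdgeHistory (Fin n) 2} {e : Sym2 (Fin n)} {l : List (Sym2 (Fin n))}

theorem isCopy_iff_isContained {α β : Type} {F : SimpleGraph α} {G : SimpleGraph β} :
    IsCopy F G ↔ F ⊑ G :=
  ⟨fun ⟨f, hf⟩ ↦ ⟨⟨⟨f, hf _ _⟩, f.injective⟩⟩,
    fun ⟨f⟩ ↦ ⟨f.toEmbedding, fun _ _ h ↦ f.toHom.map_adj h⟩⟩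

theorem blueIfSafeStrategy_eq_one_iff :
    blueIfSafeStrategy ℓ n h e = 1 ↔ (∃ e', (e', 0) ∈ h ∧ ∃ v, v ∈ e ∧ v ∈ e') ∧
      ¬ pathGraph (ℓ + 1) ⊑ fromEdgeSet (insert e {e' | (e', 1) ∈ h}) := by
  rw [← isCopy_iff_isContained, blueIfSafeStrategy]
  split_ifs with hsafe
  · exact iff_of_true rfl hsafe
  · exact iff_of_false zero_ne_one hsafe

theorem not_isContained_blue (hℓ : 1 ≤ ℓ) (l : List (Sym2 (Fin n))) :
    ¬ pathGraph (ℓ + 1) ⊑ colorGraph (runPainter (blueIfSafeStrategy ℓ n) l) 1 := by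
  induction l using List.reverseRecOn with
  | nil =>
    rw [pathGraph_isContained_iff]
    rintro ⟨u, v, p, -, hp⟩
    have hpos : 0 < p.edges.length := by rwa [p.length_edges, hp]
    obtain ⟨e, he⟩ := List.exists_mem_of_length_pos hpos
    simpa [runPainter, runPainterAux, colorGraph] using p.edges_subset_edgeSet he
  | append_singleton l e ih =>
    rw [runPainter_concat, colorGraph]
    by_cases hc : blueIfSafeStrategy ℓ n (runPainter (blueIfSafeStrategy ℓ n) l) e = 1
    · convert (blueIfSafeStrategy_eq_one_iff.1 hc).2 using 3
      ext e'
      simp [hc, or_comm]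
    · convert ih using 2
      simp [colorGraph, Ne.symm hc]

theorem isGreedyColoring_of_validEdgeSeq (hℓ : 1 ≤ ℓ) (hl : ValidEdgeSeq l)
    (hacyclic : (boardOf l).IsAcyclic) :
    IsGreedyColoring ℓ (colorGraph (runPainter (blueIfSafeStrategy ℓ n) l) 0)
      (colorGraph (runPainter (blueIfSafeStrategy ℓ n) l) 1) l.idxOf where
  isAcyclic := by rwa [colorGraph_zero_sup_colorGraph_one]
  disjoint := by
    rw [← disjoint_edgeSet]
    refine Set.disjoint_left.2 fun e he₀ he₁ ↦ zero_ne_one (α := Fin 2) ?_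
    rw [mem_edgeSet_colorGraph_runPainter _ hl, mem_runPainter_iff _ hl.1] at he₀ he₁
    exact he₀.2.symm.trans he₁.2
  injOn e he f _ hef := by
    rw [mem_edgeSet_colorGraph_runPainter _ hl] at he
    exact (List.idxOf_inj ((exists_mem_runPainter_iff _ l).1 ⟨_, he⟩)).1 hef
  hasEarlierNeighbor_of_blue e he := by
    rw [mem_edgeSet_colorGraph_runPainter _ hl, mem_runPainter_iff _ hl.1] at he
    rw [hasEarlierNeighbor_colorGraph_iff _ hl]
    exact (blueIfSafeStrategy_eq_one_iff.1 he.2).1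
  isThreatened_of_red u w huw hearlier := by
    rw [← mem_edgeSet, mem_edgeSet_colorGraph_runPainter _ hl, mem_runPainter_iff _ hl.1] at huw
    rw [hasEarlierNeighbor_colorGraph_iff _ hl] at hearlier
    have threat := not_and_not_right.1 (blueIfSafeStrategy_eq_one_iff.not.1
      (huw.2.trans_ne zero_ne_one)) hearlier
    exact isThreatened_colorGraph_of_isContained_insert _ hl (not_isContained_blue hℓ _) threat

theorem painterAvoidsTree_blueIfSafeStrategy (hℓ : 3 ≤ ℓ) (n : ℕ) :
    PainterAvoidsTree (pathGraph (ℓ + 1)) 2 ((ℓ + 1) / 3 * (3 * ℓ / 2 - 4) + 2 * (ℓ - 1)) n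
      (blueIfSafeStrategy ℓ n) := by
  rintro l hl htree ⟨c, hc⟩
  have board := htree l.length
  rw [List.take_length] at board
  rw [isCopy_iff_isContained] at hc
  rcases Fin.exists_fin_two.1 ⟨c, rfl⟩ with rfl | rfl
  · obtain ⟨u, v, p, hp, hlen⟩ := pathGraph_isContained_iff.1 hc
    have greedy := isGreedyColoring_of_validEdgeSeq (ℓ := ℓ) (by omega) hl board.1
    have lt_size := greedy.lt_ncard_componentEdges hℓ hp hlen
    rw [colorGraph_zero_sup_colorGraph_one] at lt_size
    exact lt_size.not_ge (ncard_componentEdges_le_of_treeSizeLE board u)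
  · exact not_isContained_blue (by omega) l hc

end BlueIfSafe

theorem TreeSizeLE.mono {V : Type} {G : SimpleGraph V} {k m : ℕ} (h : TreeSizeLE G k)
    (hkm : k ≤ m) : TreeSizeLE G m :=
  ⟨h.1, fun S hS ↦ (h.2 S hS).trans hkm⟩

theorem PainterWinsTree.lt_of_builderWinsTree {α : Type} {F : SimpleGraph α} {r k m : ℕ}
    (hP : PainterWinsTree F r k) (hB : BuilderWinsTree F r m) : k < m := by
  by_contra! hmk
  obtain ⟨a, hB⟩ := hB
  obtain ⟨π, hπ⟩ := hP a
  obtain ⟨l, hl, htree, hmono⟩ := hB π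
  exact hπ l hl (fun i ↦ (htree i).mono hmk) hmono

theorem statement14_general {ℓ : ℕ} (hℓ : 3 ≤ ℓ) :
    (∀ n : ℕ, PainterAvoidsTree (pathGraph (ℓ + 1)) 2
      ((ℓ + 1) / 3 * (3 * ℓ / 2 - 4) + 2 * (ℓ - 1)) n (blueIfSafeStrategy ℓ n)) ∧
    PainterWinsTree (pathGraph (ℓ + 1)) 2 ((ℓ + 1) / 3 * (3 * ℓ / 2 - 4) + 2 * (ℓ - 1)) ∧
    ∀ k : ℕ, BuilderWinsTree (pathGraph (ℓ + 1)) 2 k →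
      (ℓ + 1) / 3 * (3 * ℓ / 2 - 4) + 2 * (ℓ - 1) + 1 ≤ k := by
  have avoids := painterAvoidsTree_blueIfSafeStrategy hℓ
  have wins : PainterWinsTree (pathGraph (ℓ + 1)) 2 _ := fun n ↦ ⟨_, avoids n⟩
  exact ⟨avoids, wins, fun _ ↦ wins.lt_of_builderWinsTree⟩

/-- Painter has a winning strategy in the deterministic `P_12`-avoidance
game with 2 colors and tree size restriction 78 — namely the strategy that colors an edge
blue iff it is adjacent to a red edge and does not complete a blue `P_12` — and consequently
every tree size restriction for which Builder wins is at least 79, i.e. `k*(P_12,2) ≥ 79`. -/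
theorem statement14 :
    (∀ n : ℕ, PainterAvoidsTree (SimpleGraph.pathGraph 13) 2 78 n (blueIfSafeStrategy 12 n)) ∧
    PainterWinsTree (SimpleGraph.pathGraph 13) 2 78 ∧
    (∀ k : ℕ, BuilderWinsTree (SimpleGraph.pathGraph 13) 2 k → 79 ≤ k) :=
  statement14_general (ℓ := 12) (by norm_num)
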